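/- arXiv:2603.05203 — 2 statements merged into one kernel-verified Lean document; each statement's English description precedes it below -/
import Mathlib

section
/- Let p₀, p₁, …, p_m ∈ ℤ² be a sequence with |(p_{i+1})₁ − (p_i)₁| + |(p_{i+1})₂ − (p_i)₂| = 1 for all 0 ≤ i < m (a walk in the grid graph on ℤ²), and let O ⊆ ℤ² be a set of occupied positions with O ∩ {p₀, …, p_m} = ∅. Then there exists a continuous map γ : [0, 1] → ℝ² with γ(0) = p₀ and γ(1) = p_m such that for every u ∈ [0, 1]: cell(γ(u)) ⊆ cell(p₀) ∪ cell(p₁) ∪ ⋯ ∪ cell(p_m), and the interior of cell(γ(u)) is disjoint from cell(r) for every r ∈ O. -/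
/-- The closed axis-aligned unit square with bottom-left corner `x`. -/
def cell (x : ℝ × ℝ) : Set (ℝ × ℝ) := Set.Icc x.1 (x.1 + 1) ×ˢ Set.Icc x.2 (x.2 + 1)

/-- The canonical embedding of an integer grid point into the plane. -/
def toR2 (p : ℤ × ℤ) : ℝ × ℝ := ((p.1 : ℝ), (p.2 : ℝ))

/-!
The square slides along the segments `[p i, p (i + 1)]`. While it does so it is covered by the
cells of `p i` and `p (i + 1)`, because two intervals of equal length that touch or overlap cover
every translate lying between them. Avoidance of the occupied cells then needs no further
geometry: distinct grid cells have disjoint interiors and each cell is the closure of its interior,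
so the interior of any set covered by the cells of the walk misses every other grid cell.
-/

theorem joinedIn_of_forall_joinedIn_succ {X : Type*} [TopologicalSpace X] {S : Set X} {m : ℕ}
    {p : Fin (m + 1) → X} (h_zero : p 0 ∈ S)
    (h_succ : ∀ i : Fin m, JoinedIn S (p i.castSucc) (p i.succ)) (i : Fin (m + 1)) :
    JoinedIn S (p 0) (p i) := by
  induction i using Fin.induction with
  | zero => exact JoinedIn.refl h_zero
  | succ i ih => exact ih.trans (h_succ i)

theorem Icc_add_subset_union_of_mem_uIcc {α : Type*} [AddCommGroup α] [LinearOrder α]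
    [IsOrderedAddMonoid α] {a b t w : α} (hab : |b - a| ≤ w) (ht : t ∈ Set.uIcc a b) :
    Set.Icc t (t + w) ⊆ Set.Icc a (a + w) ∪ Set.Icc b (b + w) := by
  obtain ⟨hba_le, hab_le⟩ := abs_sub_le_iff.mp hab
  rw [Set.Icc_union_Icc' (sub_le_iff_le_add'.mp hba_le) (sub_le_iff_le_add'.mp hab_le),
    max_add_add_right]
  exact Set.Icc_subset_Icc ht.1 (add_le_add_left ht.2 w)

theorem cell_subset_union_of_mem_segment_of_snd_eq {a b x : ℝ × ℝ} (h_fst : |b.1 - a.1| ≤ 1)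
    (h_snd : a.2 = b.2) (hx : x ∈ segment ℝ a b) : cell x ⊆ cell a ∪ cell b := by
  obtain ⟨hx_fst, hx_snd⟩ := Prod.segment_subset a b hx
  rw [segment_eq_uIcc] at hx_fst
  rw [← h_snd, segment_same, Set.mem_singleton_iff] at hx_snd
  rw [cell, cell, cell, ← h_snd, hx_snd, ← Set.union_prod]
  exact Set.prod_mono_left (Icc_add_subset_union_of_mem_uIcc h_fst hx_fst)

theorem cell_subset_union_of_mem_segment_of_fst_eq {a b x : ℝ × ℝ} (h_fst : a.1 = b.1)
    (h_snd : |b.2 - a.2| ≤ 1) (hx : x ∈ segment ℝ a b) : cell x ⊆ cell a ∪ cell b := by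
  obtain ⟨hx_fst, hx_snd⟩ := Prod.segment_subset a b hx
  rw [← h_fst, segment_same, Set.mem_singleton_iff] at hx_fst
  rw [segment_eq_uIcc] at hx_snd
  rw [cell, cell, cell, ← h_fst, hx_fst, ← Set.prod_union]
  exact Set.prod_mono_right (Icc_add_subset_union_of_mem_uIcc h_snd hx_snd)

theorem cell_subset_union_of_mem_segment_toR2 {p q : ℤ × ℤ} {x : ℝ × ℝ}
    (hpq : |q.1 - p.1| + |q.2 - p.2| ≤ 1) (hx : x ∈ segment ℝ (toR2 p) (toR2 q)) :
    cell x ⊆ cell (toR2 p) ∪ cell (toR2 q) := by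
  have h_aligned : p.1 = q.1 ∧ |q.2 - p.2| ≤ 1 ∨ |q.1 - p.1| ≤ 1 ∧ p.2 = q.2 := by grind
  rcases h_aligned with ⟨h_fst, h_snd⟩ | ⟨h_fst, h_snd⟩
  · exact cell_subset_union_of_mem_segment_of_fst_eq (congrArg Int.cast h_fst)
      (by simpa only [toR2] using mod_cast h_snd) hx
  · exact cell_subset_union_of_mem_segment_of_snd_eq (by simpa only [toR2] using mod_cast h_fst)
      (congrArg Int.cast h_snd) hx

theorem interior_cell (x : ℝ × ℝ) :
    interior (cell x) = Set.Ioo x.1 (x.1 + 1) ×ˢ Set.Ioo x.2 (x.2 + 1) := by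
  rw [cell, interior_prod_eq, interior_Icc, interior_Icc]

theorem closure_interior_cell (x : ℝ × ℝ) : closure (interior (cell x)) = cell x := by
  rw [interior_cell, closure_prod_eq, closure_Ioo (by simp), closure_Ioo (by simp), cell]

theorem disjoint_interior_cell_toR2 {p q : ℤ × ℤ} (hpq : p ≠ q) :
    Disjoint (interior (cell (toR2 p))) (interior (cell (toR2 q))) := by
  rw [interior_cell, interior_cell, Set.disjoint_prod]
  refine (not_and_or.mp (mt Prod.ext_iff.mpr hpq)).imp (fun h_fst ↦ ?_) fun h_snd ↦ ?_
  · exact Set.pairwise_disjoint_Ioo_intCast ℝ h_fst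
  · exact Set.pairwise_disjoint_Ioo_intCast ℝ h_snd

theorem disjoint_interior_cell_of_subset_iUnion {ι : Sort*} {p : ι → ℤ × ℤ} {r : ℤ × ℤ}
    {S : Set (ℝ × ℝ)} (hS : S ⊆ ⋃ i, cell (toR2 (p i))) (hr : ∀ i, p i ≠ r) :
    Disjoint (interior S) (cell (toR2 r)) := by
  have h_cell (i : ι) : Disjoint (cell (toR2 (p i))) (interior (cell (toR2 r))) := by
    rw [← closure_interior_cell (toR2 (p i))]
    exact (disjoint_interior_cell_toR2 (hr i)).closure_left isOpen_interior
  have h_interior : Disjoint S (interior (cell (toR2 r))) :=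
    (Set.disjoint_iUnion_left.mpr h_cell).mono_left hS
  rw [← closure_interior_cell (toR2 r)]
  exact (h_interior.mono_left interior_subset).closure_right isOpen_interior

theorem joinedIn_setOf_cell_subset_iUnion {m : ℕ} {p : Fin (m + 1) → ℤ × ℤ}
    (hadj : ∀ i : Fin m,
      |(p i.succ).1 - (p i.castSucc).1| + |(p i.succ).2 - (p i.castSucc).2| ≤ 1)
    (i : Fin (m + 1)) :
    JoinedIn {x | cell x ⊆ ⋃ j, cell (toR2 (p j))} (toR2 (p 0)) (toR2 (p i)) := by
  have h_cell (j : Fin (m + 1)) : cell (toR2 (p j)) ⊆ ⋃ j, cell (toR2 (p j)) :=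
    Set.subset_iUnion (fun j ↦ cell (toR2 (p j))) j
  refine joinedIn_of_forall_joinedIn_succ (p := fun j ↦ toR2 (p j)) (h_cell 0) (fun j ↦ ?_) i
  refine JoinedIn.of_segment_subset fun x hx ↦ ?_
  exact (cell_subset_union_of_mem_segment_toR2 (hadj j) hx).trans
    (Set.union_subset (h_cell _) (h_cell _))

/-- A walk `p 0, …, p m` in the grid graph on `ℤ²` avoiding a set `O` of occupied
positions yields a continuous motion `γ` of a unit square from `p 0` to `p m` that stays
inside the union of the cells of the walk and whose interior never meets an occupied cell. -/
theorem walk_to_continuous_motion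
    (m : ℕ) (p : Fin (m + 1) → ℤ × ℤ)
    (hadj : ∀ i : Fin m,
      |(p i.succ).1 - (p i.castSucc).1| + |(p i.succ).2 - (p i.castSucc).2| = 1)
    (O : Set (ℤ × ℤ)) (hO : ∀ i : Fin (m + 1), p i ∉ O) :
    ∃ γ : ℝ → ℝ × ℝ, ContinuousOn γ (Set.Icc 0 1) ∧
      γ 0 = toR2 (p 0) ∧ γ 1 = toR2 (p (Fin.last m)) ∧
      ∀ u ∈ Set.Icc (0 : ℝ) 1,
        (cell (γ u) ⊆ ⋃ i : Fin (m + 1), cell (toR2 (p i))) ∧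
        ∀ r ∈ O, interior (cell (γ u)) ∩ cell (toR2 r) = ∅ := by
  obtain ⟨γ, hγ⟩ := joinedIn_setOf_cell_subset_iUnion (fun i ↦ (hadj i).le) (Fin.last m)
  refine ⟨γ.extend, γ.continuous_extend.continuousOn, γ.extend_zero, γ.extend_one,
    fun u hu ↦ ?_⟩
  have h_cover : cell (γ.extend u) ⊆ ⋃ i, cell (toR2 (p i)) := by
    rw [γ.extend_apply hu]
    exact hγ ⟨u, hu⟩
  refine ⟨h_cover, fun r hr ↦ Set.disjoint_iff_inter_eq_empty.mp ?_⟩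
  exact disjoint_interior_cell_of_subset_iUnion h_cover fun i ↦
    (ne_of_mem_of_not_mem hr (hO i)).symm
end

section
/- Let V be a finite type and f : V → V → ℕ. Let v₀, v₁, …, v_m ∈ V with m ≥ 1, the vertices v₀, …, v_m pairwise distinct, and f(vᵢ, v_{i+1}) ≥ 1 for all 0 ≤ i < m (a directed path in the support of f from s = v₀ to t = v_m). Define g : V → V → ℕ by subtracting 1 from f on each edge (vᵢ, v_{i+1}) of the path and leaving f unchanged elsewhere. Then excess_g(s) = excess_f(s) − 1, excess_g(t) = excess_f(t) + 1, and excess_g(v) = excess_f(v) for every vertex v ∉ {s, t}. -/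
/-- The total outflow of vertex `v` under the flow `f`. -/
def flowOut {V : Type*} [Fintype V] (f : V → V → ℕ) (v : V) : ℕ := ∑ u, f v u

/-- The total inflow of vertex `v` under the flow `f`. -/
def flowIn {V : Type*} [Fintype V] (f : V → V → ℕ) (v : V) : ℕ := ∑ u, f u v

/-- The excess (outflow minus inflow, in `ℤ`) of vertex `v` under the flow `f`. -/
def excess {V : Type*} [Fintype V] (f : V → V → ℕ) (v : V) : ℤ :=
  (flowOut f v : ℤ) - (flowIn f v : ℤ)

/-!
A path traverses each of its edges once, so `f` is `g` plus the flow that carries one unit along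
every step of the path, and by additivity it suffices to know the excess of the latter. A single
edge `a → b` has excess `δ_a - δ_b`, and along any walk these contributions telescope to
`δ_start - δ_end`.
-/

theorem sum_castSucc_sub_succ {M : Type*} [AddCommGroup M] {m : ℕ} (x : Fin (m + 1) → M) :
    ∑ i : Fin m, (x i.castSucc - x i.succ) = x 0 - x (Fin.last m) := by
  rw [Finset.sum_sub_distrib, sub_eq_sub_iff_add_eq_add, ← Fin.sum_univ_castSucc,
    Fin.sum_univ_succ]

section UnitFlow

variable {V : Type*} [DecidableEq V]

/-- The flow carrying one unit along the edge `a → b` and nothing elsewhere; flows along walks are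
sums of these. -/
def unitFlow (a b : V) : V → V → ℕ := fun x y => if a = x ∧ b = y then 1 else 0

/-- The flow carrying one unit along each step of the walk `v 0, v 1, …, v m`, which
cancellation removes. An edge traversed several times is counted with multiplicity. -/
def walkFlow {m : ℕ} (v : Fin (m + 1) → V) : V → V → ℕ :=
  ∑ i : Fin m, unitFlow (v i.castSucc) (v i.succ)

theorem walkFlow_apply {m : ℕ} (v : Fin (m + 1) → V) (a b : V) :
    walkFlow v a b = ∑ i : Fin m, if v i.castSucc = a ∧ v i.succ = b then 1 else 0 := by
  simp only [walkFlow, unitFlow, Finset.sum_apply]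

theorem walkFlow_eq_zero {m : ℕ} {v : Fin (m + 1) → V} {a b : V}
    (hab : ¬ ∃ i : Fin m, v i.castSucc = a ∧ v i.succ = b) : walkFlow v a b = 0 := by
  rw [walkFlow_apply]
  exact Finset.sum_eq_zero fun i _ => if_neg fun hi => hab ⟨i, hi⟩

theorem walkFlow_castSucc_succ {m : ℕ} {v : Fin (m + 1) → V}
    (htrail : Function.Injective fun i : Fin m => (v i.castSucc, v i.succ)) (i : Fin m) :
    walkFlow v (v i.castSucc) (v i.succ) = 1 := by
  have same_edge_iff (j : Fin m) : (v j.castSucc = v i.castSucc ∧ v j.succ = v i.succ) ↔ j = i :=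
    Prod.mk_inj.symm.trans htrail.eq_iff
  simp only [walkFlow_apply, same_edge_iff, Finset.sum_ite_eq', Finset.mem_univ, if_true]

theorem add_walkFlow_eq {f g : V → V → ℕ} {m : ℕ} {v : Fin (m + 1) → V}
    (htrail : Function.Injective fun i : Fin m => (v i.castSucc, v i.succ))
    (hpos : ∀ i : Fin m, 1 ≤ f (v i.castSucc) (v i.succ))
    (hg_edge : ∀ i : Fin m, g (v i.castSucc) (v i.succ) = f (v i.castSucc) (v i.succ) - 1)
    (hg_off : ∀ a b : V, (¬ ∃ i : Fin m, v i.castSucc = a ∧ v i.succ = b) → g a b = f a b) :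
    g + walkFlow v = f := by
  ext a b
  rw [Pi.add_apply, Pi.add_apply]
  by_cases hab : ∃ i : Fin m, v i.castSucc = a ∧ v i.succ = b
  · obtain ⟨i, rfl, rfl⟩ := hab
    rw [walkFlow_castSucc_succ htrail, hg_edge, Nat.sub_add_cancel (hpos i)]
  · rw [walkFlow_eq_zero hab, hg_off a b hab, add_zero]

end UnitFlow

section Excess

variable {V : Type*} [Fintype V]

theorem excess_add (f g : V → V → ℕ) : excess (f + g) = excess f + excess g := by
  ext w
  simp only [excess, flowOut, flowIn, Pi.add_apply, Finset.sum_add_distrib, Nat.cast_add]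
  ring

theorem excess_sum {ι : Type*} (s : Finset ι) (f : ι → V → V → ℕ) :
    excess (∑ i ∈ s, f i) = ∑ i ∈ s, excess (f i) := by
  have excess_zero : excess (0 : V → V → ℕ) = 0 := by
    ext w
    simp [excess, flowOut, flowIn]
  exact map_sum (AddMonoidHom.mk ⟨excess, excess_zero⟩ excess_add) f s

variable [DecidableEq V]

theorem excess_unitFlow (a b : V) :
    excess (unitFlow a b) = Pi.single a 1 - Pi.single b 1 := by
  ext w
  simp [excess, flowOut, flowIn, unitFlow, ite_and, Pi.single_apply, eq_comm]

theorem excess_walkFlow {m : ℕ} (v : Fin (m + 1) → V) :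
    excess (walkFlow v) = Pi.single (v 0) 1 - Pi.single (v (Fin.last m)) 1 := by
  simp only [walkFlow, excess_sum, excess_unitFlow]
  exact sum_castSucc_sub_succ fun k => Pi.single (v k) 1

theorem path_cancellation_excess_general (f g : V → V → ℕ) (m : ℕ) (v : Fin (m + 1) → V)
    (htrail : Function.Injective fun i : Fin m => (v i.castSucc, v i.succ))
    (hpos : ∀ i : Fin m, 1 ≤ f (v i.castSucc) (v i.succ))
    (hg_edge : ∀ i : Fin m, g (v i.castSucc) (v i.succ) = f (v i.castSucc) (v i.succ) - 1)
    (hg_off : ∀ a b : V, (¬ ∃ i : Fin m, v i.castSucc = a ∧ v i.succ = b) → g a b = f a b) :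
    excess g = excess f - Pi.single (v 0) 1 + Pi.single (v (Fin.last m)) 1 := by
  rw [← add_walkFlow_eq htrail hpos hg_edge hg_off, excess_add, excess_walkFlow]
  abel

end Excess

/-- Path cancellation: subtracting one unit of flow along a directed path
`v 0, v 1, …, v m` (with pairwise distinct vertices and positive flow on each path edge)
decreases the excess of the start `v 0` by one, increases the excess of the end `v m` by
one, and preserves the excess at every other vertex. -/
theorem path_cancellation_excess
    {V : Type*} [Fintype V] (f g : V → V → ℕ)
    (m : ℕ) (hm : 1 ≤ m) (v : Fin (m + 1) → V)
    (hinj : Function.Injective v)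
    (hpos : ∀ i : Fin m, 1 ≤ f (v i.castSucc) (v i.succ))
    (hg_edge : ∀ i : Fin m, g (v i.castSucc) (v i.succ) = f (v i.castSucc) (v i.succ) - 1)
    (hg_off : ∀ a b : V, (¬ ∃ i : Fin m, v i.castSucc = a ∧ v i.succ = b) → g a b = f a b) :
    excess g (v 0) = excess f (v 0) - 1 ∧
    excess g (v (Fin.last m)) = excess f (v (Fin.last m)) + 1 ∧
    ∀ w : V, w ≠ v 0 → w ≠ v (Fin.last m) → excess g w = excess f w := by
  classical
  have htrail : Function.Injective fun i : Fin m => (v i.castSucc, v i.succ) :=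
    fun i j hij => Fin.castSucc_injective m (hinj (congrArg Prod.fst hij))
  have hends : v 0 ≠ v (Fin.last m) := hinj.ne (Fin.ne_of_lt hm)
  rw [path_cancellation_excess_general f g m v htrail hpos hg_edge hg_off]
  refine ⟨?_, ?_, fun w hw₀ hw_last => ?_⟩
  · simp [hends]
  · simp [hends.symm]
  · simp [hw₀, hw_last]
end
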